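/- arXiv:1910.06260 — 3 statements merged into one kernel-verified Lean document; each statement's English description precedes it below -/
import Mathlib

section
/- Let G be a 1-walk regular graph on n vertices with adjacency matrix A. Let M, N be nonzero positive semidefinite matrices with M ∘ A = 0 and N ∘ (J − I − A) = 0. Then n ≥ (tr JM)(tr JN)/((tr M)(tr N)). -/
open Matrix
open scoped ComplexOrder

open scoped MatrixOrder Matrix.Norms.L2Operator in
lemma aux_trace_mul_nonneg {n : ℕ} {P Q : Matrix (Fin n) (Fin n) ℂ}
    (hP : P.PosSemidef) (hQ : Q.PosSemidef) : 0 ≤ (P * Q).trace := by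
  obtain ⟨B, rfl⟩ := CStarAlgebra.nonneg_iff_eq_star_mul_self.mp hP.nonneg
  rw [Matrix.star_eq_conjTranspose, Matrix.mul_assoc, Matrix.trace_mul_comm]
  exact (hQ.mul_mul_conjTranspose_same B).trace_nonneg

lemma nonneg_of_mul_nonneg_right_aux {x y : ℂ} (hx : 0 < x) (h : 0 ≤ x * y) : 0 ≤ y := by
  have h1 : 0 ≤ x⁻¹ := (inv_pos.mpr hx).le
  have h2 := mul_nonneg h1 h
  rwa [inv_mul_cancel_left₀ hx.ne'] at h2

lemma aux_trace_zero {n : ℕ} {X N : Matrix (Fin n) (Fin n) ℂ}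
    (hX : Xᵀ = X) (h : Matrix.hadamard N X = 0) : (X * N).trace = 0 := by
  simp only [Matrix.trace, Matrix.diag, Matrix.mul_apply]
  refine Finset.sum_eq_zero fun i _ => Finset.sum_eq_zero fun j _ => ?_
  have h1 := congrFun (congrFun h j) i
  have h2 := congrFun (congrFun hX j) i
  simp only [Matrix.hadamard_apply, Matrix.zero_apply, Matrix.transpose_apply] at h1 h2
  rw [h2, mul_comm]; exact h1

lemma aux_poly {n : ℕ} {A : Matrix (Fin n) (Fin n) ℂ} (hdiag : ∀ i, A i i = 0)
    (hwalk : ∀ k : ℕ, 0 < k → ∃ a b : ℂ,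
      Matrix.hadamard (A ^ k) 1 = a • (1 : Matrix (Fin n) (Fin n) ℂ) ∧
      Matrix.hadamard (A ^ k) A = b • A) (p : Polynomial ℂ) :
    ∃ a b : ℂ, Matrix.hadamard (Polynomial.aeval A p) 1 = a • (1 : Matrix (Fin n) (Fin n) ℂ) ∧
      Matrix.hadamard (Polynomial.aeval A p) A = b • A := by
  induction p using Polynomial.induction_on' with
  | add p q hp hq =>
    obtain ⟨a, b, h1, h2⟩ := hp
    obtain ⟨a', b', h1', h2'⟩ := hq
    refine ⟨a + a', b + b', ?_, ?_⟩
    · rw [map_add, Matrix.add_hadamard, h1, h1', add_smul]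
    · rw [map_add, Matrix.add_hadamard, h2, h2', add_smul]
  | monomial k c =>
    have : ∃ a b : ℂ, Matrix.hadamard (A ^ k) 1 = a • (1 : Matrix (Fin n) (Fin n) ℂ) ∧
      Matrix.hadamard (A ^ k) A = b • A := by
      rcases Nat.eq_zero_or_pos k with rfl | hk
      · refine ⟨1, 0, ?_, ?_⟩
        · ext i j
          by_cases h : i = j <;> simp [Matrix.one_apply, h]
        · ext i j
          by_cases h : i = j
          · subst h; simp [hdiag]
          · simp [Matrix.one_apply, h]
      · exact hwalk k hk
    obtain ⟨a, b, h1, h2⟩ := this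
    refine ⟨c * a, c * b, ?_, ?_⟩
    · rw [Polynomial.aeval_monomial, ← Algebra.smul_def, Matrix.smul_hadamard, h1, smul_smul]
    · rw [Polynomial.aeval_monomial, ← Algebra.smul_def, Matrix.smul_hadamard, h2, smul_smul]

lemma aux_key {n : ℕ} {A P M : Matrix (Fin n) (Fin n) ℂ} (hn : 0 < n) (c e d : ℂ)
    (hP : P.PosSemidef) (hPe : P = c • 1 + e • A) (hM : M.PosSemidef)
    (hAJ : A * (Matrix.of fun _ _ => (1 : ℂ)) = d • (Matrix.of fun _ _ => (1 : ℂ)))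
    (hJA : (Matrix.of fun _ _ => (1 : ℂ)) * A = d • (Matrix.of fun _ _ => (1 : ℂ)))
    (hAM : (A * M).trace = 0) :
    (c + e * d) * ((Matrix.of fun _ _ => (1 : ℂ)) * M).trace ≤ n * (c * M.trace) := by
  set J : Matrix (Fin n) (Fin n) ℂ := Matrix.of fun _ _ => (1 : ℂ) with hJ
  have hJJ : J * J = (n : ℂ) • J := by
    ext i j; simp [hJ, Matrix.mul_apply]
  have hJH : Jᴴ = J := by ext i j; simp [hJ]
  have hPJ : P * J = (c + e * d) • J := by
    rw [hPe, add_mul, smul_mul_assoc, smul_mul_assoc, one_mul, hAJ, smul_smul, add_smul]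
  have hJP : J * P = (c + e * d) • J := by
    rw [hPe, mul_add, mul_smul_comm, mul_smul_comm, mul_one, hJA, smul_smul, add_smul]
  have hBH : ((n : ℂ) • (1 : Matrix (Fin n) (Fin n) ℂ) - J)ᴴ = (n : ℂ) • 1 - J := by
    rw [Matrix.conjTranspose_sub, Matrix.conjTranspose_smul, hJH]; simp
  have h1 := hP.mul_mul_conjTranspose_same ((n : ℂ) • (1 : Matrix (Fin n) (Fin n) ℂ) - J)
  rw [hBH] at h1
  have h2 : ((n : ℂ) • (1 : Matrix (Fin n) (Fin n) ℂ) - J) * P * ((n : ℂ) • 1 - J)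
      = (n : ℂ) • ((n : ℂ) • P - (c + e * d) • J) := by
    simp only [sub_mul, mul_sub, smul_mul_assoc, mul_smul_comm, one_mul, mul_one, hPJ, hJP, hJJ]
    module
  rw [h2] at h1
  have h3 := aux_trace_mul_nonneg h1 hM
  have h4 : (P * M).trace = c * M.trace := by
    rw [hPe, add_mul, smul_mul_assoc, smul_mul_assoc, one_mul, Matrix.trace_add,
      Matrix.trace_smul, Matrix.trace_smul, hAM]; simp
  rw [smul_mul_assoc, sub_mul, smul_mul_assoc, smul_mul_assoc, Matrix.trace_smul,
    Matrix.trace_sub, Matrix.trace_smul, Matrix.trace_smul, h4] at h3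
  have hn' : (0 : ℂ) < n := by exact_mod_cast hn
  simp only [smul_eq_mul] at h3
  exact sub_nonneg.mp (nonneg_of_mul_nonneg_right_aux hn' h3)

lemma aux_psd {n : ℕ} {A N : Matrix (Fin n) (Fin n) ℂ} (hn : 0 < n) (hA : A.IsHermitian)
    (d : ℂ) (hd : 0 < d)
    (hpoly : ∀ p : Polynomial ℂ, ∃ a b : ℂ,
      (Polynomial.aeval A p).trace = n * a ∧
      (A * Polynomial.aeval A p).trace = b * (n * d) ∧
      (Polynomial.aeval A p * N).trace = a * N.trace + b * (A * N).trace)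
    (hN : N.PosSemidef) :
    ((d * N.trace) • (1 : Matrix (Fin n) (Fin n) ℂ) + (A * N).trace • A).PosSemidef := by
  set U : Matrix (Fin n) (Fin n) ℂ := (hA.eigenvectorUnitary : Matrix (Fin n) (Fin n) ℂ) with hU
  set l : Fin n → ℂ := fun i => (hA.eigenvalues i : ℂ) with hl
  have hUU : Uᴴ * U = 1 := Unitary.coe_star_mul_self hA.eigenvectorUnitary
  have hUU' : U * Uᴴ = 1 := Unitary.coe_mul_star_self hA.eigenvectorUnitary
  have hsp : A = U * Matrix.diagonal l * Uᴴ := by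
    have := hA.spectral_theorem
    rw [Unitary.conjStarAlgAut_apply] at this
    exact this
  have hmul : ∀ f g : Fin n → ℂ, (U * Matrix.diagonal f * Uᴴ) * (U * Matrix.diagonal g * Uᴴ)
      = U * Matrix.diagonal (f * g) * Uᴴ := by
    intro f g
    calc _ = U * Matrix.diagonal f * (Uᴴ * U) * Matrix.diagonal g * Uᴴ := by
            simp only [Matrix.mul_assoc]
      _ = _ := by
        rw [hUU, Matrix.mul_one, Matrix.mul_assoc U, Matrix.diagonal_mul_diagonal]; rfl
  have hpow : ∀ k : ℕ, A ^ k = U * Matrix.diagonal (l ^ k) * Uᴴ := by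
    intro k
    induction k with
    | zero =>
      rw [pow_zero, pow_zero]
      have : Matrix.diagonal (1 : Fin n → ℂ) = 1 := Matrix.diagonal_one
      rw [this, Matrix.mul_one, hUU']
    | succ k ih =>
      rw [pow_succ, ih, pow_succ, ← hmul, ← hsp]
  have hae : ∀ p : Polynomial ℂ, Polynomial.aeval A p
      = U * Matrix.diagonal (fun i => p.eval (l i)) * Uᴴ := by
    intro p
    induction p using Polynomial.induction_on' with
    | add p q hp hq =>
      simp only [map_add, Polynomial.eval_add]
      rw [hp, hq, ← Matrix.diagonal_add, Matrix.mul_add, Matrix.add_mul]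
    | monomial k c =>
      rw [Polynomial.aeval_monomial, ← Algebra.smul_def, hpow, ← Matrix.smul_mul,
        ← Matrix.mul_smul, ← Matrix.diagonal_smul]
      congr 3
      ext i
      simp
  have hev : ∀ i, 0 ≤ d * N.trace + (A * N).trace * l i := by
    intro i
    set p := Lagrange.basis (Finset.univ.image l) id (l i) with hp
    have hpi : p.eval (l i) = 1 := by
      have := Lagrange.eval_basis_self (s := Finset.univ.image l) (v := id) (i := l i)
        (Function.injective_id.injOn) (by simp)
      simpa using this
    have hpj : ∀ j, l j ≠ l i → p.eval (l j) = 0 := by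
      intro j hj
      have := Lagrange.eval_basis_of_ne (s := Finset.univ.image l) (v := id) (i := l i) (j := l j)
        hj.symm (by simp)
      simpa using this
    set f : Fin n → ℂ := fun j => p.eval (l j) with hf
    have hf01 : ∀ j, 0 ≤ f j := by
      intro j
      by_cases h : l j = l i
      · simp only [hf, h, hpi]; exact zero_le_one
      · simp only [hf, hpj j h]; exact le_rfl
    have hE := hae p
    have hEpsd : (Polynomial.aeval A p).PosSemidef := by
      rw [hE]
      exact (Matrix.PosSemidef.diagonal hf01).mul_mul_conjTranspose_same U
    have hlE : A * Polynomial.aeval A p = l i • Polynomial.aeval A p := by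
      rw [hE]
      nth_rewrite 1 [hsp]
      rw [hmul, ← Matrix.smul_mul, ← Matrix.mul_smul, ← Matrix.diagonal_smul]
      congr 3
      ext j
      by_cases h : l j = l i
      · simp [h]
      · simp [hpj j h]
    have htr : 0 < (Polynomial.aeval A p).trace := by
      rw [hE, Matrix.trace_mul_comm, ← Matrix.mul_assoc, hUU, Matrix.one_mul, Matrix.trace_diagonal]
      exact Finset.sum_pos' (fun j _ => hf01 j) ⟨i, Finset.mem_univ _, by
        simp only [hf, hpi]; exact zero_lt_one⟩
    obtain ⟨a, b, h1, h2, h3⟩ := hpoly p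
    have h4 := aux_trace_mul_nonneg hEpsd hN
    have hn' : (0 : ℂ) < n := by exact_mod_cast hn
    rw [hlE, Matrix.trace_smul, smul_eq_mul] at h2
    apply nonneg_of_mul_nonneg_right_aux htr
    have h5 : (Polynomial.aeval A p).trace * (d * N.trace + (A * N).trace * l i)
        = (n * d) * (Polynomial.aeval A p * N).trace := by
      rw [h3]
      linear_combination (d * N.trace) * h1 + (A * N).trace * h2
    rw [h5]
    exact mul_nonneg (mul_nonneg hn'.le hd.le) h4
  have : (d * N.trace) • (1 : Matrix (Fin n) (Fin n) ℂ) + (A * N).trace • A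
      = U * Matrix.diagonal (fun i => d * N.trace + (A * N).trace * l i) * Uᴴ := by
    have h := hae (Polynomial.C (d * N.trace) + Polynomial.C ((A * N).trace) * Polynomial.X)
    simp only [map_add, map_mul, Polynomial.aeval_C, Polynomial.aeval_X, Polynomial.eval_add,
      Polynomial.eval_mul, Polynomial.eval_C, Polynomial.eval_X] at h
    rw [← h, Algebra.smul_def, Algebra.smul_def, mul_one, map_mul]
  rw [this]
  exact (Matrix.PosSemidef.diagonal hev).mul_mul_conjTranspose_same U

/-- Theorem for 1-walk regular graphs (condition (A)): if G is 1-walk regular with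
adjacency matrix A, and M, N are nonzero PSD matrices with M ∘ A = 0 and
N ∘ (J - I - A) = 0, then n ≥ (tr JM)(tr JN)/((tr M)(tr N)). -/
theorem one_walk_regular_ratio_bound_A {n : ℕ}
    (G : SimpleGraph (Fin n)) [DecidableRel G.Adj]
    (hwalk : ∀ k : ℕ, 0 < k → ∃ a b : ℂ,
      Matrix.hadamard ((G.adjMatrix ℂ) ^ k) 1 = a • (1 : Matrix (Fin n) (Fin n) ℂ) ∧
      Matrix.hadamard ((G.adjMatrix ℂ) ^ k) (G.adjMatrix ℂ) = b • G.adjMatrix ℂ)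
    (M N : Matrix (Fin n) (Fin n) ℂ)
    (hM : M.PosSemidef) (hN : N.PosSemidef)
    (hMnz : M ≠ 0) (hNnz : N ≠ 0)
    (hMA : Matrix.hadamard M (G.adjMatrix ℂ) = 0)
    (hNA : Matrix.hadamard N ((Matrix.of fun _ _ => (1 : ℂ)) - 1 - G.adjMatrix ℂ) = 0) :
    Matrix.trace ((Matrix.of fun _ _ => (1 : ℂ)) * M) *
        Matrix.trace ((Matrix.of fun _ _ => (1 : ℂ)) * N) /
      (Matrix.trace M * Matrix.trace N) ≤ (n : ℂ) := by
  have hn : 0 < n := by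
    rcases Nat.eq_zero_or_pos n with rfl | h
    · exact absurd (Subsingleton.elim M 0) hMnz
    · exact h
  have hn' : (0 : ℂ) < n := by exact_mod_cast hn
  set A := G.adjMatrix ℂ with hA
  set J : Matrix (Fin n) (Fin n) ℂ := Matrix.of fun _ _ => (1 : ℂ) with hJ
  have hAT : Aᵀ = A := SimpleGraph.transpose_adjMatrix G
  have hAH : A.IsHermitian := by
    ext i j
    simp [hA, Matrix.conjTranspose_apply, SimpleGraph.adjMatrix_apply, G.adj_comm]
  have hAii : ∀ i, A i i = 0 := by intro i; simp [hA]
  obtain ⟨d, hdeg⟩ : ∃ d : ℕ, ∀ i, G.degree i = d := by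
    obtain ⟨a, b, h1, -⟩ := hwalk 2 (by norm_num)
    have h : ∀ i, (G.degree i : ℂ) = a := by
      intro i
      have := congrFun (congrFun h1 i) i
      rw [Matrix.hadamard_apply, pow_two, hA, SimpleGraph.adjMatrix_mul_self_apply_self] at this
      simpa using this
    refine ⟨G.degree ⟨0, hn⟩, fun i => ?_⟩
    exact_mod_cast (h i).trans (h _).symm
  have hrow : ∀ i, ∑ j, A i j = d := by
    intro i
    rw [← hdeg i]
    simp [hA, SimpleGraph.adjMatrix_apply, SimpleGraph.degree, SimpleGraph.neighborFinset_eq_filter]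
  have hAJ : A * J = (d : ℂ) • J := by
    ext i j
    simp [hJ, Matrix.mul_apply, hrow]
  have hJT : Jᵀ = J := by ext i j; simp [hJ]
  have hJA : J * A = (d : ℂ) • J := by
    have := congrArg Matrix.transpose hAJ
    rwa [Matrix.transpose_mul, hAT, hJT, Matrix.transpose_smul, hJT] at this
  have hAM : (A * M).trace = 0 := aux_trace_zero hAT hMA
  have hJN : (J * N).trace = N.trace + (A * N).trace := by
    have h := aux_trace_zero (X := J - 1 - A) (by
      rw [Matrix.transpose_sub, Matrix.transpose_sub, hJT, hAT, Matrix.transpose_one]) hNA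
    rw [sub_mul, sub_mul, one_mul, Matrix.trace_sub, Matrix.trace_sub] at h
    linear_combination h
  have htM : 0 < M.trace := lt_of_le_of_ne hM.trace_nonneg
    (fun h => hMnz (hM.trace_eq_zero_iff.mp h.symm))
  have htN : 0 < N.trace := lt_of_le_of_ne hN.trace_nonneg
    (fun h => hNnz (hN.trace_eq_zero_iff.mp h.symm))
  have main : (J * N).trace * (J * M).trace ≤ n * (N.trace * M.trace) := by
    rcases Nat.eq_zero_or_pos d with h0 | hd
    · have hA0 : A = 0 := by
        ext i j
        have h1 := hdeg i
        rw [h0] at h1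
        have : ¬ G.Adj i j := by
          intro hadj
          have := (G.degree_pos_iff_exists_adj i).mpr ⟨j, hadj⟩
          omega
        simp [hA, this]
      have h := aux_key (A := A) (P := (1 : Matrix (Fin n) (Fin n) ℂ)) hn 1 0 d
        Matrix.PosSemidef.one (by simp) hM hAJ hJA hAM
      rw [hJN, hA0]
      simp only [zero_mul, add_zero, Matrix.trace_zero, one_mul] at h ⊢
      have := mul_le_mul_of_nonneg_left h htN.le
      calc _ ≤ _ := this
        _ = _ := by ring
    · have hd' : (0 : ℂ) < d := by exact_mod_cast hd
      have hP := aux_psd (A := A) (N := N) hn hAH d hd' (by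
        intro p
        obtain ⟨a, b, h1, h2⟩ := aux_poly hAii hwalk p
        set E := Polynomial.aeval A p
        have hEd : ∀ i, E i i = a := by
          intro i
          simpa [Matrix.hadamard_apply] using congrFun (congrFun h1 i) i
        have hEA : ∀ i j, E i j * A i j = b * A i j := by
          intro i j
          simpa [Matrix.hadamard_apply] using congrFun (congrFun h2 i) j
        have hAs : ∀ i j, A j i = A i j := fun i j => congrFun (congrFun hAT i) j
        refine ⟨a, b, ?_, ?_, ?_⟩
        · simp [Matrix.trace, hEd]
        · rw [Matrix.trace_mul_comm]
          simp only [Matrix.trace, Matrix.diag, Matrix.mul_apply]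
          simp only [hAs, hEA, ← Finset.mul_sum, hrow]
          simp
        · simp only [Matrix.trace, Matrix.diag, Matrix.mul_apply, Finset.mul_sum]
          rw [← Finset.sum_add_distrib]
          refine Finset.sum_congr rfl fun i _ => ?_
          have : a * N i i = ∑ j, (if i = j then a * N j i else 0) := by simp
          rw [this, ← Finset.sum_add_distrib]
          refine Finset.sum_congr rfl fun j _ => ?_
          by_cases hij : i = j
          · subst hij; simp [hEd, hAii]
          · have hEA' := hEA i j
            have hN' := congrFun (congrFun hNA j) i
            by_cases hadj : G.Adj i j
            · have h1 : A i j = 1 := by simp [hA, hadj]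
              rw [h1] at hEA' ⊢
              rw [mul_one, mul_one] at hEA'
              simp [hij, hEA']
            · have h1 : A i j = 0 := by simp [hA, hadj]
              have h2 : A j i = 0 := by rw [hAs, h1]
              have : N j i = 0 := by
                simpa [hJ, Matrix.hadamard_apply, h2, Matrix.one_apply, Ne.symm hij] using hN'
              simp [this]) hN
      have h := aux_key hn _ _ (d : ℂ) hP rfl hM hAJ hJA hAM
      have h' : 0 ≤ (d : ℂ) * (n * (N.trace * M.trace) - (J * N).trace * (J * M).trace) := by
        have := sub_nonneg.mpr h
        rw [hJN]
        convert this using 1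
        ring
      exact sub_nonneg.mp (nonneg_of_mul_nonneg_right_aux hd' h')
  rw [div_le_iff₀ (mul_pos htM htN)]
  calc _ = (J * N).trace * (J * M).trace := by ring
    _ ≤ _ := main
    _ = _ := by ring
end

section
/- If G is a 1-walk regular graph on n vertices, then ϑ(G)·ϑ(Ḡ) = n, where ϑ is the Lovász theta number. -/
open Matrix
open scoped ComplexOrder

/-- The Lovász theta number of a graph. -/
noncomputable def lovaszTheta {n : ℕ} (G : SimpleGraph (Fin n)) : ℝ :=
  sSup {r : ℝ | ∃ X : Matrix (Fin n) (Fin n) ℂ,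
    X.PosSemidef ∧ (∀ i j, G.Adj i j → X i j = 0) ∧ Matrix.trace X = 1 ∧
    Matrix.trace ((Matrix.of fun _ _ => (1 : ℂ)) * X) = (r : ℂ)}

namespace LovaszAux

lemma trace_mul_nonneg' {n : ℕ} {M X : Matrix (Fin n) (Fin n) ℂ} (hM : M.PosSemidef)
    (hX : X.PosSemidef) : 0 ≤ (M * X).trace := by
  obtain ⟨m, v, rfl⟩ := Matrix.posSemidef_iff_eq_sum_vecMulVec.mp hX
  rw [Finset.mul_sum, Matrix.trace_sum]
  refine Finset.sum_nonneg fun i _ => ?_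
  rw [Matrix.mul_vecMulVec, Matrix.trace_vecMulVec, dotProduct_comm]
  exact hM.dotProduct_mulVec_nonneg _

/-- all-ones matrix -/
noncomputable abbrev J (n : ℕ) : Matrix (Fin n) (Fin n) ℂ := Matrix.of fun _ _ => (1 : ℂ)

lemma J_posSemidef (n : ℕ) : (J n).PosSemidef := by
  have := Matrix.posSemidef_vecMulVec_self_star (fun _ : Fin n => (1 : ℂ))
  convert this using 1
  ext i j
  simp [vecMulVec_apply]

lemma J_mul_J (n : ℕ) : J n * J n = (n : ℂ) • J n := by
  ext i j
  simp [Matrix.mul_apply]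

lemma smul_psd {n : ℕ} {M : Matrix (Fin n) (Fin n) ℂ} (hM : M.PosSemidef) {r : ℝ} (hr : 0 ≤ r) :
    ((r : ℂ) • M).PosSemidef := hM.smul (by exact_mod_cast hr)

/-- the main duality argument -/
lemma main {n : ℕ} (hn : 0 < n) (G : SimpleGraph (Fin n)) [DecidableRel G.Adj]
    (τ d c b : ℝ) (hτ : τ < 0) (hd : 0 ≤ d) (hc : 0 ≤ c) (hb : b < 0) (hrel : d * b = τ * c)
    (hA : (G.adjMatrix ℂ - (τ : ℂ) • 1).PosSemidef)
    (hAJ : G.adjMatrix ℂ * J n = (d : ℂ) • J n)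
    (hJA : J n * G.adjMatrix ℂ = (d : ℂ) • J n)
    (E : Matrix (Fin n) (Fin n) ℂ) (hE : E.PosSemidef) (hEd : ∀ i, E i i = c)
    (hEe : ∀ i j, G.Adj i j → E i j = b) :
    lovaszTheta G * lovaszTheta Gᶜ = (n : ℝ) := by
  have hn' : (0 : ℝ) < n := by exact_mod_cast hn
  have hnC : (n : ℂ) ≠ 0 := by exact_mod_cast hn.ne'
  set A := G.adjMatrix ℂ with hAdef
  have hτ0 : τ ≠ 0 := hτ.ne
  have hb0 : b ≠ 0 := hb.ne
  have htrJJ : (J n * J n).trace = (n : ℂ) ^ 2 := by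
    rw [J_mul_J]; simp [Matrix.trace, sq]
  have htrJ : (J n).trace = (n : ℂ) := by simp [Matrix.trace]
  have htrA : A.trace = 0 := G.trace_adjMatrix ℂ
  set t : ℝ := 1 - d / τ with ht
  have htb : t = 1 - c / b := by
    rw [ht]; congr 1; field_simp; linarith
  have ht0 : 0 < t := by
    have := div_nonpos_of_nonneg_of_nonpos hd hτ.le
    linarith
  -- upper bound for G
  have h1 : ∀ X : Matrix (Fin n) (Fin n) ℂ, X.PosSemidef → (∀ i j, G.Adj i j → X i j = 0) →
      X.trace = 1 → ∀ r : ℝ, (J n * X).trace = r → r ≤ n / t := by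
    intro X hX hXe hXt r hr
    have hP : ((1 : Matrix (Fin n) (Fin n) ℂ) - (n : ℂ)⁻¹ • J n)ᴴ = 1 - (n : ℂ)⁻¹ • J n := by
      rw [Matrix.conjTranspose_sub, Matrix.conjTranspose_smul, (J_posSemidef n).1.eq]
      simp
    have hM := hA.conjTranspose_mul_mul_same (1 - (n : ℂ)⁻¹ • J n)
    rw [hP] at hM
    have hMeq : (1 - (n : ℂ)⁻¹ • J n) * (A - (τ : ℂ) • 1) * (1 - (n : ℂ)⁻¹ • J n)
        = A - (τ : ℂ) • 1 - (((d : ℂ) - τ) * (n : ℂ)⁻¹) • J n := by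
      simp only [mul_sub, sub_mul, one_mul, mul_one, Matrix.smul_mul, Matrix.mul_smul, hAJ, hJA,
        J_mul_J, smul_smul]
      have h3 : (n : ℂ)⁻¹ * ((n : ℂ)⁻¹ * (↑d * ↑n)) = (n : ℂ)⁻¹ * d := by field_simp
      ext i j
      simp
      field_simp
      ring
    rw [hMeq] at hM
    have h0 := trace_mul_nonneg' hM hX
    have hAX : (A * X).trace = 0 := by
      rw [Matrix.trace]
      refine Finset.sum_eq_zero fun i _ => ?_
      rw [Matrix.diag_apply, Matrix.mul_apply]
      refine Finset.sum_eq_zero fun j _ => ?_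
      by_cases h : G.Adj i j
      · simp [hXe j i h.symm]
      · simp [hAdef, SimpleGraph.adjMatrix_apply, h]
    rw [sub_mul, sub_mul, Matrix.trace_sub, Matrix.trace_sub, hAX, Matrix.smul_mul, Matrix.smul_mul,
      one_mul, Matrix.trace_smul, Matrix.trace_smul, hXt, hr] at h0
    have h0' : 0 ≤ 0 - τ - (d - τ) * (n : ℝ)⁻¹ * r := by
      have : (0 : ℂ) ≤ ((0 - τ - (d - τ) * (n : ℝ)⁻¹ * r : ℝ) : ℂ) := by
        convert h0 using 1
        push_cast
        simp
      exact_mod_cast this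
    rw [le_div_iff₀ ht0, ht]
    have h5 : (-τ) * (r * (1 - d / τ)) ≤ (-τ) * n := by
      have e1 : (-τ) * (r * (1 - d / τ)) = r * (d - τ) := by field_simp; ring
      rw [e1]
      have e2 : (d - τ) * (n : ℝ)⁻¹ * r * n = r * (d - τ) := by field_simp
      nlinarith
    exact le_of_mul_le_mul_left h5 (by linarith)
  have h2 : ∃ X : Matrix (Fin n) (Fin n) ℂ, X.PosSemidef ∧ (∀ i j, Gᶜ.Adj i j → X i j = 0) ∧
      X.trace = 1 ∧ (J n * X).trace = (t : ℂ) := by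
    refine ⟨(((-τ * n)⁻¹ : ℝ) : ℂ) • (A - (τ : ℂ) • 1), smul_psd hA ?_, ?_, ?_, ?_⟩
    · exact inv_nonneg.2 (mul_nonneg (by linarith) hn'.le)
    · intro i j h
      rw [SimpleGraph.compl_adj] at h
      simp [hAdef, SimpleGraph.adjMatrix_apply, h.1, h.2]
    · rw [Matrix.trace_smul, Matrix.trace_sub, htrA, Matrix.trace_smul, Matrix.trace_one]
      have : (τ : ℂ) ≠ 0 := by exact_mod_cast hτ0
      simp
      field_simp
    · rw [Matrix.mul_smul, mul_sub, hJA, Matrix.mul_smul, mul_one, Matrix.trace_smul,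
        Matrix.trace_sub, Matrix.trace_smul, Matrix.trace_smul, htrJ]
      have : (τ : ℂ) ≠ 0 := by exact_mod_cast hτ0
      rw [ht]
      push_cast
      simp only [smul_eq_mul]
      field_simp
      ring
  have h3 : ∀ X : Matrix (Fin n) (Fin n) ℂ, X.PosSemidef → (∀ i j, Gᶜ.Adj i j → X i j = 0) →
      X.trace = 1 → ∀ r : ℝ, (J n * X).trace = r → r ≤ t := by
    intro X hX hXe hXt r hr
    have h0 := trace_mul_nonneg' hE hX
    have hEX : (E * X).trace = ((c : ℂ) - b) * X.trace + b * (J n * X).trace := by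
      simp only [Matrix.trace, Matrix.diag_apply, Matrix.mul_apply, Finset.mul_sum]
      rw [← Finset.sum_add_distrib]
      refine Finset.sum_congr rfl fun i _ => ?_
      rw [← Finset.sum_erase_add _ _ (Finset.mem_univ i),
        ← Finset.sum_erase_add (a := i) (f := fun k => (b : ℂ) * (J n i k * X k i)) _
          (Finset.mem_univ i), hEd]
      have : ∑ x ∈ Finset.univ.erase i, E i x * X x i
          = ∑ x ∈ Finset.univ.erase i, (b : ℂ) * (J n i x * X x i) := by
        refine Finset.sum_congr rfl fun k hk => ?_
        by_cases h : G.Adj i k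
        · simp [hEe i k h]
        · have : X k i = 0 := hXe k i (by
            rw [SimpleGraph.compl_adj]
            exact ⟨(Finset.mem_erase.1 hk).1, fun h' => h h'.symm⟩)
          simp [this]
      rw [this]
      simp
      ring
    rw [hEX, hXt, hr] at h0
    have h0' : 0 ≤ (c - b) * 1 + b * r := by exact_mod_cast h0
    rw [htb]
    have h5 : (-b) * r ≤ (-b) * (1 - c / b) := by
      have : (-b) * (1 - c / b) = c - b := by field_simp; ring
      linarith
    exact le_of_mul_le_mul_left h5 (by linarith)
  have h4 : ∃ X : Matrix (Fin n) (Fin n) ℂ, X.PosSemidef ∧ (∀ i j, G.Adj i j → X i j = 0) ∧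
      X.trace = 1 ∧ ∃ r : ℝ, (J n * X).trace = r ∧ n / t ≤ r := by
    have hcb : 0 < c - b := by linarith
    have hcbC : (c : ℂ) - b ≠ 0 := by exact_mod_cast hcb.ne'
    have hJE := trace_mul_nonneg' (J_posSemidef n) hE
    obtain ⟨s, hs⟩ : ∃ s : ℝ, (J n * E).trace = s := by
      refine ⟨(J n * E).trace.re, ?_⟩
      apply Complex.ext
      · simp
      · rw [Complex.le_def] at hJE
        simpa using hJE.2.symm
    rw [hs] at hJE
    have hs0 : 0 ≤ s := by exact_mod_cast hJE
    refine ⟨((((c - b) * n)⁻¹ : ℝ) : ℂ) • (E + ((-b : ℝ) : ℂ) • J n),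
      smul_psd (hE.add (smul_psd (J_posSemidef n) (by linarith))) ?_, ?_, ?_, 
      ((c - b) * n)⁻¹ * (s + (-b) * n ^ 2), ?_, ?_⟩
    · positivity
    · intro i j h
      simp [hEe i j h]
    · rw [Matrix.trace_smul, Matrix.trace_add, Matrix.trace_smul, htrJ]
      have : E.trace = n * c := by simp [Matrix.trace, hEd]
      rw [this]
      push_cast
      simp only [smul_eq_mul]
      field_simp
      ring
    · rw [Matrix.mul_smul, mul_add, Matrix.mul_smul, Matrix.trace_smul, Matrix.trace_add,
        Matrix.trace_smul, htrJJ, hs]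
      push_cast
      simp
    · have e : (n : ℝ) / t = ((c - b) * n)⁻¹ * ((-b) * n ^ 2) := by
        have e2 : t = (c - b) / (-b) := by rw [htb]; field_simp; ring
        rw [e2]; field_simp
      rw [e]
      gcongr
      linarith
  have g1 : lovaszTheta G = n / t := by
    obtain ⟨X, hX, hXe, hXt, r, hr, hle⟩ := h4
    have : r = n / t := le_antisymm (h1 X hX hXe hXt r hr) hle
    apply IsGreatest.csSup_eq
    refine ⟨⟨X, hX, hXe, hXt, this ▸ hr⟩, ?_⟩
    rintro r ⟨X, hX, hXe, hXt, hr⟩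
    exact h1 X hX hXe hXt r hr
  have g2 : lovaszTheta Gᶜ = t := by
    obtain ⟨X, hX, hXe, hXt, hr⟩ := h2
    apply IsGreatest.csSup_eq
    refine ⟨⟨X, hX, hXe, hXt, hr⟩, ?_⟩
    rintro r ⟨X, hX, hXe, hXt, hr⟩
    exact h3 X hX hXe hXt r hr
  rw [g1, g2]
  field_simp

lemma exists_min {n : ℕ} (hn : 0 < n) {A : Matrix (Fin n) (Fin n) ℂ} (hA : A.IsHermitian) :
    ∃ τ : ℝ, (A - (τ : ℂ) • 1).PosSemidef ∧ (τ : ℂ) ∈ spectrum ℂ A := by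
  haveI : Nonempty (Fin n) := ⟨⟨0, hn⟩⟩
  obtain ⟨i, hi⟩ := Finite.exists_min hA.eigenvalues
  refine ⟨hA.eigenvalues i, ?_, ?_⟩
  · have hD : (diagonal (fun j => ((hA.eigenvalues j - hA.eigenvalues i : ℝ) : ℂ))).PosSemidef := by
      apply Matrix.PosSemidef.diagonal
      intro j
      have := hi j
      have h2 : 0 ≤ hA.eigenvalues j - hA.eigenvalues i := by linarith
      show (0 : ℂ) ≤ ((hA.eigenvalues j - hA.eigenvalues i : ℝ) : ℂ)
      exact_mod_cast h2
    have h := hD.mul_mul_conjTranspose_same (hA.eigenvectorUnitary : Matrix (Fin n) (Fin n) ℂ)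
    convert h using 1
    have hU : (hA.eigenvectorUnitary : Matrix (Fin n) (Fin n) ℂ) *
        (hA.eigenvectorUnitary : Matrix (Fin n) (Fin n) ℂ)ᴴ = 1 :=
      (Matrix.mem_unitaryGroup_iff).1 hA.eigenvectorUnitary.2
    have hd : diagonal (fun j => ((hA.eigenvalues j - hA.eigenvalues i : ℝ) : ℂ))
        = diagonal (RCLike.ofReal ∘ hA.eigenvalues) - ((hA.eigenvalues i : ℝ) : ℂ) • 1 := by
      ext j k
      by_cases h : j = k
      · subst h; simp
      · simp [h]
    rw [hd, mul_sub, sub_mul, Matrix.mul_smul, mul_one, Matrix.smul_mul, hU]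
    congr 1
    have := hA.spectral_theorem
    rw [Unitary.conjStarAlgAut_apply] at this
    exact this
  · rw [hA.spectrum_eq_image_range]
    exact ⟨_, ⟨i, rfl⟩, rfl⟩

open Polynomial in
lemma exists_E {n : ℕ} (hn : 0 < n) {A : Matrix (Fin n) (Fin n) ℂ} (hA : A.IsHermitian) {τ : ℂ}
    (hτ : τ ∈ spectrum ℂ A) :
    ∃ p : ℂ[X], (aeval A p).PosSemidef ∧ aeval A p ≠ 0 ∧ A * aeval A p = τ • aeval A p := by
  haveI : Nonempty (Fin n) := ⟨⟨0, hn⟩⟩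
  have hint : IsIntegral ℂ A := Algebra.IsIntegral.isIntegral A
  have hroot : (minpoly ℂ A).IsRoot τ := by
    have := spectrum.subset_polynomial_aeval A (minpoly ℂ A) ⟨τ, hτ, rfl⟩
    rw [minpoly.aeval, spectrum.zero_eq] at this
    exact this
  obtain ⟨q, hq⟩ := dvd_iff_isRoot.2 hroot
  have hq0 : q ≠ 0 := by
    rintro rfl
    exact minpoly.ne_zero hint (by rw [hq, mul_zero])
  have hqA : aeval A q ≠ 0 := by
    intro h
    have h1 := minpoly.degree_le_of_ne_zero ℂ A hq0 h
    rw [hq, degree_mul, degree_X_sub_C, degree_eq_natDegree hq0] at h1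
    have : 1 + q.natDegree ≤ q.natDegree := by exact_mod_cast h1
    omega
  have hAq : A * aeval A q = τ • aeval A q := by
    have := minpoly.aeval ℂ A
    rw [hq] at this
    simp only [map_mul, map_sub, aeval_X, aeval_C, sub_mul, Algebra.algebraMap_eq_smul_one,
      Matrix.smul_mul, one_mul] at this
    exact sub_eq_zero.1 this
  have hstar : aeval A (q.map (starRingEnd ℂ)) = (aeval A q)ᴴ := by
    rw [aeval_eq_sum_range, aeval_eq_sum_range, Matrix.conjTranspose_sum,
      natDegree_map]
    refine Finset.sum_congr rfl fun i _ => ?_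
    rw [coeff_map, Matrix.conjTranspose_smul, Matrix.conjTranspose_pow, hA.eq]
    rfl
  refine ⟨q * q.map (starRingEnd ℂ), ?_, ?_, ?_⟩
  · rw [map_mul, hstar]; exact Matrix.posSemidef_self_mul_conjTranspose _
  · rw [map_mul, hstar]
    intro h
    exact hqA (Matrix.self_mul_conjTranspose_eq_zero.1 h)
  · rw [map_mul, ← mul_assoc, hAq, Matrix.smul_mul]

open Polynomial in
lemma poly_const {n : ℕ} (G : SimpleGraph (Fin n)) [DecidableRel G.Adj]
    (hwalk : ∀ k : ℕ, 0 < k → ∃ a b : ℂ,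
      Matrix.hadamard ((G.adjMatrix ℂ) ^ k) 1 = a • (1 : Matrix (Fin n) (Fin n) ℂ) ∧
      Matrix.hadamard ((G.adjMatrix ℂ) ^ k) (G.adjMatrix ℂ) = b • G.adjMatrix ℂ) (p : ℂ[X]) :
    ∃ a b : ℂ, (∀ i, (aeval (G.adjMatrix ℂ) p) i i = a) ∧
      (∀ i j, G.Adj i j → (aeval (G.adjMatrix ℂ) p) i j = b) := by
  induction p using Polynomial.induction_on' with
  | add p q hp hq =>
    obtain ⟨a, b, h1, h2⟩ := hp
    obtain ⟨a', b', h1', h2'⟩ := hq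
    exact ⟨a + a', b + b', fun i => by simp [h1, h1'], fun i j h => by simp [h2 i j h, h2' i j h]⟩
  | monomial k r =>
    rcases Nat.eq_zero_or_pos k with rfl | hk
    · refine ⟨r, 0, fun i => ?_, fun i j h => ?_⟩
      · simp [aeval_monomial, Algebra.algebraMap_eq_smul_one]
      · simp [aeval_monomial, Algebra.algebraMap_eq_smul_one, h.ne]
    · obtain ⟨a, b, h1, h2⟩ := hwalk k hk
      refine ⟨r * a, r * b, fun i => ?_, fun i j h => ?_⟩
      · have := congrFun (congrFun h1 i) i
        simp at this
        simp [aeval_monomial, Algebra.algebraMap_eq_smul_one, this]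
      · have := congrFun (congrFun h2 i) j
        simp [SimpleGraph.adjMatrix_apply, h] at this
        simp [aeval_monomial, Algebra.algebraMap_eq_smul_one, this]

end LovaszAux

/-- If G is 1-walk regular on n vertices, then ϑ(G)·ϑ(Ḡ) = n. -/
theorem lovaszTheta_mul_compl_eq {n : ℕ}
    (G : SimpleGraph (Fin n)) [DecidableRel G.Adj]
    (hwalk : ∀ k : ℕ, 0 < k → ∃ a b : ℂ,
      Matrix.hadamard ((G.adjMatrix ℂ) ^ k) 1 = a • (1 : Matrix (Fin n) (Fin n) ℂ) ∧
      Matrix.hadamard ((G.adjMatrix ℂ) ^ k) (G.adjMatrix ℂ) = b • G.adjMatrix ℂ) :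
    lovaszTheta G * lovaszTheta Gᶜ = (n : ℝ) := by
  rcases Nat.eq_zero_or_pos n with rfl | hn
  · have : lovaszTheta G = 0 := by
      unfold lovaszTheta
      convert Real.sSup_empty
      rw [Set.eq_empty_iff_forall_notMem]
      rintro r ⟨X, -, -, h, -⟩
      simp [Matrix.trace] at h
    simp [this]
  by_cases hG : ∃ i j, G.Adj i j
  · obtain ⟨u, v, huv⟩ := hG
    have hdeg : ∀ i, G.degree i = G.degree u := by
      obtain ⟨a, b, h1, -⟩ := hwalk 2 (by norm_num)
      have h : ∀ i, (G.degree i : ℂ) = a := by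
        intro i
        have := congrFun (congrFun h1 i) i
        rw [pow_two, Matrix.hadamard_apply, SimpleGraph.adjMatrix_mul_self_apply_self] at this
        simpa using this
      intro i
      exact_mod_cast (h i).trans (h u).symm
    have hdpos : 0 < G.degree u := (G.degree_pos_iff_exists_adj u).2 ⟨v, huv⟩
    have hA : (G.adjMatrix ℂ).IsHermitian := by
      ext i j
      simp [Matrix.conjTranspose_apply, SimpleGraph.adjMatrix_apply, G.adj_comm]
    obtain ⟨τ, hpsd, hspec⟩ := LovaszAux.exists_min hn hA
    obtain ⟨p, hE, hE0, hAE⟩ := LovaszAux.exists_E hn hA hspec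
    obtain ⟨c, b, hc, hb⟩ := LovaszAux.poly_const G hwalk p
    set E := Polynomial.aeval (G.adjMatrix ℂ) p with hEdef
    have hτ : τ < 0 := by
      have h := hpsd.dotProduct_mulVec_nonneg (Pi.single u 1 - Pi.single v 1)
      have hne := huv.ne
      simp [Matrix.mulVec_sub, sub_dotProduct, dotProduct_sub, Matrix.sub_apply,
        SimpleGraph.adjMatrix_apply, huv, huv.symm, hne, hne.symm] at h
      have h2 : 1 + τ ≤ -τ - 1 := by exact_mod_cast h
      linarith
    have hc0 : 0 ≤ c := by rw [← hc u]; exact hE.diag_nonneg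
    have hcne : c ≠ 0 := by
      rintro rfl
      exact hE0 (hE.trace_eq_zero_iff.1 (by simp [Matrix.trace, hc]))
    have hrel : (G.degree u : ℂ) * b = τ * c := by
      have := congrFun (congrFun hAE u) u
      rw [SimpleGraph.adjMatrix_mul_apply, Matrix.smul_apply, hc, smul_eq_mul] at this
      rw [← this, Finset.sum_congr rfl (fun x hx =>
        hb x u ((G.mem_neighborFinset u x).1 hx).symm)]
      simp
    obtain ⟨c', rfl⟩ : ∃ c' : ℝ, (c' : ℂ) = c := by
      refine ⟨c.re, ?_⟩
      rw [Complex.le_def] at hc0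
      apply Complex.ext
      · simp
      · simpa using hc0.2
    have hd0 : (G.degree u : ℝ) ≠ 0 := by exact_mod_cast hdpos.ne'
    have hd0C : (G.degree u : ℂ) ≠ 0 := by exact_mod_cast hdpos.ne'
    have hdR : (0 : ℝ) < G.degree u := by exact_mod_cast hdpos
    have hc' : 0 < c' := lt_of_le_of_ne (by exact_mod_cast hc0) (by
      intro h; exact hcne (by rw [← h]; simp))
    have hb' : b = ((τ * c' / G.degree u : ℝ) : ℂ) := by
      push_cast
      rw [eq_div_iff hd0C, ← hrel, mul_comm]
    refine LovaszAux.main hn G τ (G.degree u) c' (τ * c' / G.degree u) hτ hdR.le hc'.le ?_ ?_ hpsd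
      ?_ ?_ E hE hc (fun i j h => by rw [hb i j h, hb'])
    · exact div_neg_of_neg_of_pos (mul_neg_of_neg_of_pos hτ hc') hdR
    · field_simp
    · ext i j
      simp [SimpleGraph.adjMatrix_mul_apply, hdeg i]
    · ext i j
      simp [SimpleGraph.mul_adjMatrix_apply, hdeg j]
  · push Not at hG
    have hA0 : G.adjMatrix ℂ = 0 := by
      ext i j
      simp [SimpleGraph.adjMatrix_apply, hG]
    refine LovaszAux.main hn G (-1) 0 0 (-1) (by norm_num) le_rfl le_rfl (by norm_num) (by norm_num)
      ?_ ?_ ?_ 0 Matrix.PosSemidef.zero (by simp) (fun i j h => absurd h (hG i j))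
    · rw [hA0]
      simpa using Matrix.PosSemidef.one
    · simp [hA0]
    · simp [hA0]
end

section
/- If G is a 1-walk regular graph on n vertices, then ϑ⁻(Ḡ)·ϑ⁺(G) = n, where ϑ⁻ is the Schrijver theta and ϑ⁺ the Szegedy theta. -/
open Matrix
open scoped ComplexOrder

/-- The Schrijver theta number ϑ⁻ of a graph. -/
noncomputable def thetaMinus {n : ℕ} (G : SimpleGraph (Fin n)) : ℝ :=
  sSup {r : ℝ | ∃ X : Matrix (Fin n) (Fin n) ℂ,
    X.PosSemidef ∧ (∀ i j, G.Adj i j → X i j = 0) ∧ (∀ i j, 0 ≤ X i j) ∧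
    Matrix.trace X = 1 ∧
    Matrix.trace ((Matrix.of fun _ _ => (1 : ℂ)) * X) = (r : ℂ)}

/-- The Szegedy theta number ϑ⁺ of a graph. -/
noncomputable def thetaPlus {n : ℕ} (G : SimpleGraph (Fin n)) : ℝ :=
  sSup {r : ℝ | ∃ X : Matrix (Fin n) (Fin n) ℂ,
    X.PosSemidef ∧ (∀ i j, G.Adj i j → X i j ≤ 0) ∧ Matrix.trace X = 1 ∧
    Matrix.trace ((Matrix.of fun _ _ => (1 : ℂ)) * X) = (r : ℂ)}

lemma tr_nonneg {n : ℕ} {X Y : Matrix (Fin n) (Fin n) ℂ} (hX : X.PosSemidef) (hY : Y.PosSemidef) :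
    0 ≤ (X * Y).trace := by
  open scoped MatrixOrder in
  obtain ⟨B, hB⟩ := CStarAlgebra.nonneg_iff_eq_star_mul_self.mp hX.nonneg
  rw [hB, Matrix.mul_assoc, Matrix.trace_mul_comm]
  exact (hY.mul_mul_conjTranspose_same B).trace_nonneg

lemma abstract_theta {n : ℕ} (hn : 0 < n) (G : SimpleGraph (Fin n)) (l : ℝ) (hl : 0 < l)
    (Y Z : Matrix (Fin n) (Fin n) ℂ)
    (hZ : Z.PosSemidef) (hZd : ∀ i, Z i i = 1) (hZ0 : ∀ i j, i ≠ j → ¬ G.Adj i j → Z i j = 0)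
    (hZn : ∀ i j, 0 ≤ Z i j)
    (hZt : ((Matrix.of fun _ _ => (1 : ℂ)) * Z).trace = (n : ℂ) * l)
    (hZJ : (Z - ((l : ℂ) / n) • (Matrix.of fun _ _ => (1 : ℂ))).PosSemidef)
    (hY : Y.PosSemidef)
    (hYd : ∀ i, Y i i = l) (hY0 : ∀ i j, G.Adj i j → Y i j = 0)
    (hYt : ((Matrix.of fun _ _ => (1 : ℂ)) * Y).trace = (n : ℂ) * n)
    (hYJ : (Y - (Matrix.of fun _ _ => (1 : ℂ))).PosSemidef) :
    thetaMinus Gᶜ * thetaPlus G = (n : ℝ) := by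
  have hnC : (n : ℂ) ≠ 0 := by exact_mod_cast hn.ne'
  have hlC : (l : ℂ) ≠ 0 := by exact_mod_cast hl.ne'
  have hnR : (0 : ℝ) < n := by exact_mod_cast hn
  have h1 : thetaMinus Gᶜ = l := by
    apply IsGreatest.csSup_eq
    constructor
    · refine ⟨((1 / n : ℝ) : ℂ) • Z, hZ.smul ?_, ?_, ?_, ?_, ?_⟩
      · exact_mod_cast by positivity
      · intro i j h
        rw [SimpleGraph.compl_adj] at h
        simp [hZ0 i j h.1 h.2]
      · intro i j
        rw [Matrix.smul_apply, smul_eq_mul]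
        exact mul_nonneg (by exact_mod_cast by positivity) (hZn i j)
      · simp [Matrix.trace, hZd, hnC]
      · rw [Matrix.mul_smul, Matrix.trace_smul, hZt]
        push_cast
        simp only [smul_eq_mul]
        field_simp
    · rintro r ⟨X, hX, hX0, hXn, hXt, hr⟩
      have h := tr_nonneg hX hYJ
      have e : (X * Y).trace = l := by
        have : ∀ i j, X i j * Y j i = if i = j then (l : ℂ) * X i i else 0 := by
          intro i j
          split_ifs with hij
          · subst hij; rw [hYd, mul_comm]
          · by_cases ha : G.Adj i j
            · rw [hY0 j i ha.symm, mul_zero]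
            · rw [hX0 i j (by rw [SimpleGraph.compl_adj]; exact ⟨hij, ha⟩), zero_mul]
        simp only [Matrix.trace, Matrix.diag_apply, Matrix.mul_apply, this] at hXt ⊢
        simp [← Finset.mul_sum, hXt]
      rw [Matrix.mul_sub, Matrix.trace_sub, e, Matrix.trace_mul_comm, hr] at h
      have : (0 : ℂ) ≤ ((l - r : ℝ) : ℂ) := by simpa using h
      have := Complex.zero_le_real.mp this
      linarith
  have h2 : thetaPlus G = n / l := by
    apply IsGreatest.csSup_eq
    constructor
    · refine ⟨((1 / (n * l) : ℝ) : ℂ) • Y, hY.smul ?_, ?_, ?_, ?_⟩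
      · exact_mod_cast by positivity
      · intro i j h
        simp [hY0 i j h]
      · simp [Matrix.trace, hYd]
        field_simp
      · rw [Matrix.mul_smul, Matrix.trace_smul, hYt]
        push_cast
        simp only [smul_eq_mul]
        field_simp
    · rintro r ⟨X, hX, hX0, hXt, hr⟩
      have h := tr_nonneg hX hZJ
      have e : (X * Z).trace ≤ 1 := by
        have : ∀ i j, X i j * Z j i ≤ if i = j then X i i else 0 := by
          intro i j
          split_ifs with hij
          · subst hij; rw [hZd, mul_one]
          · by_cases ha : G.Adj i j
            · exact mul_nonpos_of_nonpos_of_nonneg (hX0 i j ha) (hZn j i)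
            · rw [hZ0 j i (Ne.symm hij) (fun h => ha h.symm), mul_zero]
        calc (X * Z).trace = ∑ i, ∑ j, X i j * Z j i := by
              simp [Matrix.trace, Matrix.mul_apply]
          _ ≤ ∑ i, ∑ j, if i = j then X i i else 0 :=
              Finset.sum_le_sum fun i _ => Finset.sum_le_sum fun j _ => this i j
          _ = 1 := by rw [← hXt]; simp [Matrix.trace]
      rw [Matrix.mul_sub, Matrix.trace_sub, Matrix.mul_smul, Matrix.trace_smul,
        Matrix.trace_mul_comm X (Matrix.of _), hr] at h
      have : (0 : ℂ) ≤ ((1 - l / n * r : ℝ) : ℂ) := by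
        have := h.trans (sub_le_sub_right e _)
        simpa using this
      have := Complex.zero_le_real.mp this
      rw [le_div_iff₀ hl]
      have h3 : l / n * r ≤ 1 := by linarith
      rw [div_mul_eq_mul_div, div_le_one hnR] at h3
      linarith
  rw [h1, h2]
  field_simp

lemma J_psd (n : ℕ) : (Matrix.of fun (_ _ : Fin n) => (1 : ℂ)).PosSemidef := by
  have := Matrix.posSemidef_vecMulVec_self_star (fun _ : Fin n => (1 : ℂ))
  convert this using 1
  ext i j
  simp [Matrix.vecMulVec_apply]

lemma J_mul_J (n : ℕ) : (Matrix.of fun (_ _ : Fin n) => (1 : ℂ)) * (Matrix.of fun _ _ => (1 : ℂ))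
    = (n : ℂ) • (Matrix.of fun _ _ => (1 : ℂ)) := by
  ext i j
  simp [Matrix.mul_apply]

/-- Deflation -/
lemma deflate {n : ℕ} (hn : 0 < n) (Z : Matrix (Fin n) (Fin n) ℂ) (hZ : Z.PosSemidef) (l : ℂ)
    (h1 : Z * (Matrix.of fun _ _ => (1 : ℂ)) = l • (Matrix.of fun _ _ => (1 : ℂ)))
    (h2 : (Matrix.of fun _ _ => (1 : ℂ)) * Z = l • (Matrix.of fun _ _ => (1 : ℂ))) :
    (Z - (l / n) • (Matrix.of fun _ _ => (1 : ℂ))).PosSemidef := by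
  have hnC : (n : ℂ) ≠ 0 := by exact_mod_cast hn.ne'
  have hJ := (J_psd n).1
  have hJJ := J_mul_J n
  generalize (Matrix.of fun (_ _ : Fin n) => (1 : ℂ)) = J at *
  have := hZ.mul_mul_conjTranspose_same (1 - (1 / n : ℂ) • J)
  convert this using 1
  rw [Matrix.conjTranspose_sub, Matrix.conjTranspose_smul, hJ.eq]
  simp only [Matrix.sub_mul, Matrix.mul_sub, Matrix.one_mul, Matrix.mul_one, Matrix.smul_mul,
    Matrix.mul_smul, h1, h2, hJJ, Matrix.conjTranspose_one, smul_smul]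
  have : star (1 / n : ℂ) = 1 / n := by simp
  rw [this]
  have e : (1 / n : ℂ) * l * n = l := by field_simp
  have e2 : l / n = 1 / n * l := by ring
  simp only [e, e2, sub_self, smul_zero, sub_zero]

lemma exists_min {n : ℕ} (hn : 0 < n) (A : Matrix (Fin n) (Fin n) ℂ) (hA : A.IsHermitian) :
    ∃ (t : ℝ) (p : Polynomial ℝ), (A - (t : ℂ) • 1).PosSemidef ∧
      (Polynomial.aeval A p).PosSemidef ∧ Polynomial.aeval A p ≠ 0 ∧
      A * Polynomial.aeval A p = (t : ℂ) • Polynomial.aeval A p := by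
  have : Nonempty (Fin n) := ⟨⟨0, hn⟩⟩
  obtain ⟨i, hi⟩ := Finite.exists_min hA.eigenvalues
  set t := hA.eigenvalues i with ht
  have hs : ((t : ℂ) • (1 : Matrix (Fin n) (Fin n) ℂ)) = algebraMap ℝ _ t := by
    rw [Algebra.algebraMap_eq_smul_one]
    ext i j; simp
  have hspec : ∀ s ∈ spectrum ℝ A, t ≤ s := by
    intro s hs
    rw [hA.spectrum_real_eq_range_eigenvalues] at hs
    obtain ⟨j, rfl⟩ := hs
    exact hi j
  have hH : (A - (t : ℂ) • 1).IsHermitian := by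
    apply hA.sub
    rw [Matrix.IsHermitian, Matrix.conjTranspose_smul]; simp
  have hpsd : (A - (t : ℂ) • 1).PosSemidef := by
    rw [hH.posSemidef_iff_eigenvalues_nonneg]
    intro j
    have := hH.eigenvalues_mem_spectrum_real j
    generalize hH.eigenvalues j = s at this ⊢
    rw [hs, ← spectrum.sub_singleton_eq] at this
    obtain ⟨x, hx, y, hy, hxy⟩ := this
    have := hspec x hx
    simp at hy hxy
    simp only [Pi.zero_apply]
    linarith
  have hint : IsIntegral ℝ A := Algebra.IsIntegral.isIntegral A
  have hroot : (minpoly ℝ A).IsRoot t := by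
    have h := spectrum.subset_polynomial_aeval A (minpoly ℝ A)
      ⟨t, hA.eigenvalues_mem_spectrum_real i, rfl⟩
    have : Nontrivial (Matrix (Fin n) (Fin n) ℂ) := inferInstance
    rw [minpoly.aeval, spectrum.zero_eq] at h
    exact h
  obtain ⟨q, hq⟩ := Polynomial.dvd_iff_isRoot.mpr hroot
  have hm := minpoly.monic hint
  have hqm : q.Monic := (Polynomial.monic_X_sub_C t).of_mul_monic_left (hq ▸ hm)
  have hQ0 : Polynomial.aeval A q ≠ 0 := by
    apply minpoly.aeval_ne_zero_of_dvdNotUnit_minpoly hint hqm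
    exact ⟨hqm.ne_zero, Polynomial.X - Polynomial.C t, Polynomial.not_isUnit_X_sub_C t,
      by rw [hq, mul_comm]⟩
  have hQH : (Polynomial.aeval A q).IsHermitian := by
    rw [Matrix.IsHermitian, Polynomial.aeval_eq_sum_range, Matrix.conjTranspose_sum]
    refine Finset.sum_congr rfl fun k _ => ?_
    rw [Matrix.conjTranspose_smul, Matrix.conjTranspose_pow, hA.eq]
    simp
  have hAQ : A * Polynomial.aeval A q = (t : ℂ) • Polynomial.aeval A q := by
    have := minpoly.aeval ℝ A
    rw [hq] at this
    simp only [map_mul, map_sub, Polynomial.aeval_X, Polynomial.aeval_C, ← hs, sub_mul,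
      Matrix.smul_mul, one_mul] at this
    exact sub_eq_zero.mp this
  refine ⟨t, q * q, hpsd, ?_, ?_, ?_⟩
  · rw [map_mul]
    have := Matrix.posSemidef_conjTranspose_mul_self (Polynomial.aeval A q)
    rwa [hQH.eq] at this
  · rw [map_mul]
    intro h
    apply hQ0
    rw [← Matrix.conjTranspose_mul_self_eq_zero, hQH.eq, h]
  · rw [map_mul, ← mul_assoc, hAQ, Matrix.smul_mul]

/-- If G is 1-walk regular on n vertices, then ϑ⁻(Ḡ)·ϑ⁺(G) = n. -/
theorem thetaMinus_compl_mul_thetaPlus_eq {n : ℕ}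
    (G : SimpleGraph (Fin n)) [DecidableRel G.Adj]
    (hwalk : ∀ k : ℕ, 0 < k → ∃ a b : ℂ,
      Matrix.hadamard ((G.adjMatrix ℂ) ^ k) 1 = a • (1 : Matrix (Fin n) (Fin n) ℂ) ∧
      Matrix.hadamard ((G.adjMatrix ℂ) ^ k) (G.adjMatrix ℂ) = b • G.adjMatrix ℂ) :
    thetaMinus Gᶜ * thetaPlus G = (n : ℝ) := by
  rcases Nat.eq_zero_or_pos n with rfl | hn
  · have h : thetaPlus G = 0 := by
      rw [thetaPlus]
      convert Real.sSup_empty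
      ext r
      simp [Matrix.trace]
    rw [h]; simp
  have hnC : (n : ℂ) ≠ 0 := by exact_mod_cast hn.ne'
  have hJt : (Matrix.of fun (_ _ : Fin n) => (1 : ℂ)).trace = n := by simp [Matrix.trace]
  by_cases hE : ∀ i j, ¬ G.Adj i j
  · apply abstract_theta hn G 1 one_pos (Matrix.of fun _ _ => (1 : ℂ)) 1 Matrix.PosSemidef.one
    · simp
    · intro i j h _; simp [h]
    · intro i j
      rw [Matrix.one_apply]; split_ifs <;> simp
    · simp [hJt]
    · rw [Complex.ofReal_one]
      exact deflate hn 1 Matrix.PosSemidef.one 1 (by simp) (by simp)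
    · exact J_psd n
    · simp
    · intro i j h; exact absurd h (hE i j)
    · rw [J_mul_J, Matrix.trace_smul, hJt, smul_eq_mul]
    · rw [sub_self]; exact Matrix.PosSemidef.zero
  push Not at hE
  obtain ⟨u, v, huv⟩ := hE
  have hwd : ∀ k : ℕ, ∃ a : ℂ, ∀ i, ((G.adjMatrix ℂ) ^ k) i i = a := by
    intro k
    rcases Nat.eq_zero_or_pos k with rfl | hk
    · exact ⟨1, by simp⟩
    obtain ⟨a, b, h, -⟩ := hwalk k hk
    refine ⟨a, fun i => ?_⟩
    have := congrFun (congrFun h i) i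
    simpa using this
  have hwa : ∀ k : ℕ, ∃ b : ℂ, ∀ i j, G.Adj i j → ((G.adjMatrix ℂ) ^ k) i j = b := by
    intro k
    rcases Nat.eq_zero_or_pos k with rfl | hk
    · exact ⟨0, fun i j h => by simp [h.ne]⟩
    obtain ⟨a, b, -, h⟩ := hwalk k hk
    refine ⟨b, fun i j hij => ?_⟩
    have := congrFun (congrFun h i) j
    simpa [hij] using this
  have hA : (G.adjMatrix ℂ).IsHermitian := by
    ext i j; simp [Matrix.conjTranspose_apply, SimpleGraph.adjMatrix_apply, G.adj_comm, apply_ite]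
  have hdeg : ∀ i, G.degree i = G.degree u := by
    obtain ⟨a, ha⟩ := hwd 2
    intro i
    have h1 := (ha i).trans (ha u).symm
    rw [pow_two, SimpleGraph.adjMatrix_mul_self_apply_self,
      SimpleGraph.adjMatrix_mul_self_apply_self] at h1
    exact_mod_cast h1
  have hAtr : (G.adjMatrix ℂ).trace = 0 := by simp
  have hA0 : G.adjMatrix ℂ ≠ 0 := by
    intro h
    have := congrFun (congrFun h u) v
    simp [huv] at this
  have hAdiag : ∀ i, (G.adjMatrix ℂ) i i = 0 := by simp
  have hAadj : ∀ i j, G.Adj i j → (G.adjMatrix ℂ) i j = 1 := by intro i j h; simp [h]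
  have hAnadj : ∀ i j, ¬ G.Adj i j → (G.adjMatrix ℂ) i j = 0 := by intro i j h; simp [h]
  have hd : 0 < G.degree u := by
    rw [SimpleGraph.degree_pos_iff_exists_adj]; exact ⟨v, huv⟩
  have hAJ : (G.adjMatrix ℂ) * (Matrix.of fun _ _ => (1 : ℂ)) =
      (G.degree u : ℂ) • (Matrix.of fun _ _ => (1 : ℂ)) := by
    ext i j
    simp [hdeg i]
  have hJA : (Matrix.of fun _ _ => (1 : ℂ)) * (G.adjMatrix ℂ) =
      (G.degree u : ℂ) • (Matrix.of fun _ _ => (1 : ℂ)) := by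
    ext i j
    simp [hdeg j]
  obtain ⟨t, p, hP, hEp, hE0, hAE⟩ := exists_min hn (G.adjMatrix ℂ) hA
  have hEd : ∃ a : ℂ, ∀ i, (Polynomial.aeval (G.adjMatrix ℂ) p) i i = a := by
    choose a ha using hwd
    refine ⟨∑ k ∈ Finset.range (p.natDegree + 1), p.coeff k • a k, fun i => ?_⟩
    simp [Polynomial.aeval_eq_sum_range, Matrix.sum_apply, ha]
  have hEa : ∃ b : ℂ, ∀ i j, G.Adj i j → (Polynomial.aeval (G.adjMatrix ℂ) p) i j = b := by
    choose a ha using hwa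
    refine ⟨∑ k ∈ Finset.range (p.natDegree + 1), p.coeff k • a k, fun i j hij => ?_⟩
    simp only [Polynomial.aeval_eq_sum_range, Matrix.sum_apply, Matrix.smul_apply]
    simp only [ha _ i j hij]
  clear hwd hwa hwalk
  generalize Polynomial.aeval (G.adjMatrix ℂ) p = E at *
  generalize hd' : G.degree u = d at *
  have hdC : (d : ℂ) ≠ 0 := by exact_mod_cast hd.ne'
  have hdR : (0 : ℝ) < d := by exact_mod_cast hd
  obtain ⟨a, ha⟩ := hEd
  obtain ⟨b, hb⟩ := hEa
  have ht : t < 0 := by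
    by_contra hcon
    push Not at hcon
    apply hA0
    have : (G.adjMatrix ℂ).PosSemidef := by
      have h := hP.add ((Matrix.PosSemidef.one (n := Fin n) (R := ℂ)).smul
        (show (0 : ℂ) ≤ (t : ℂ) by exact_mod_cast hcon))
      simpa using h
    exact this.trace_eq_zero_iff.mp hAtr
  have htC : (t : ℂ) ≠ 0 := by exact_mod_cast ht.ne
  have ha0 : 0 ≤ a := by rw [← ha u]; exact hEp.diag_nonneg
  have hane : a ≠ 0 := by
    rintro rfl
    apply hE0
    rw [← hEp.trace_eq_zero_iff]
    simp [Matrix.trace, ha]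
  have hab : (d : ℂ) * b = t * a := by
    have h := congrFun (congrFun hAE u) u
    rw [Matrix.smul_apply, ha, SimpleGraph.adjMatrix_mul_apply,
      Finset.sum_congr rfl (fun x hx => hb x u ((G.mem_neighborFinset u x).mp hx).symm)] at h
    simpa [hd'] using h
  have hbne : b ≠ 0 := by
    rintro rfl
    rw [mul_zero] at hab
    exact mul_ne_zero htC hane hab.symm
  have hJE : (Matrix.of fun _ _ => (1 : ℂ)) * E = 0 := by
    have h := congrArg (fun M => (Matrix.of fun _ _ => (1 : ℂ)) * M) hAE
    simp only [← Matrix.mul_assoc, hJA, Matrix.smul_mul, Matrix.mul_smul] at h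
    have h' : ((d : ℂ) - t) • ((Matrix.of fun _ _ => (1 : ℂ)) * E) = 0 := by
      rw [sub_smul, h, sub_self]
    refine (smul_eq_zero.mp h').resolve_left ?_
    have : (d : ℝ) - t ≠ 0 := by linarith
    exact_mod_cast this
  -- the multiplier of `E`
  have hc : (0 : ℂ) ≤ ((-(d / t) : ℝ) : ℂ) * a⁻¹ := by
    apply mul_nonneg
    · rw [Complex.zero_le_real]
      have := div_neg_of_pos_of_neg hdR ht
      linarith
    · exact inv_nonneg.mpr ha0
  have hs : (0 : ℝ) < -t⁻¹ := by have := inv_lt_zero.mpr ht; linarith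
  have hsC : (0 : ℂ) ≤ ((-t⁻¹ : ℝ) : ℂ) := by exact_mod_cast hs.le
  have hl : 0 < 1 - d / t := by
    have := div_neg_of_pos_of_neg hdR ht
    linarith
  have hZ : (1 + ((-t⁻¹ : ℝ) : ℂ) • G.adjMatrix ℂ).PosSemidef := by
    have h := hP.smul hsC
    convert h using 1
    rw [smul_sub, smul_smul]
    have : ((-t⁻¹ : ℝ) : ℂ) * t = -1 := by push_cast; field_simp
    rw [this]; module
  have hZJ : (Matrix.of fun _ _ => (1 : ℂ)) * (1 + ((-t⁻¹ : ℝ) : ℂ) • G.adjMatrix ℂ) =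
      ((1 - d / t : ℝ) : ℂ) • (Matrix.of fun _ _ => (1 : ℂ)) := by
    rw [Matrix.mul_add, Matrix.mul_smul, hJA, Matrix.mul_one, smul_smul]
    push_cast
    rw [div_eq_mul_inv]
    module
  have hJZ : (1 + ((-t⁻¹ : ℝ) : ℂ) • G.adjMatrix ℂ) * (Matrix.of fun _ _ => (1 : ℂ)) =
      ((1 - d / t : ℝ) : ℂ) • (Matrix.of fun _ _ => (1 : ℂ)) := by
    rw [Matrix.add_mul, Matrix.smul_mul, hAJ, Matrix.one_mul, smul_smul]
    push_cast
    rw [div_eq_mul_inv]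
    module
  apply abstract_theta hn G (1 - d / t) hl
    ((Matrix.of fun _ _ => (1 : ℂ)) + (((-(d / t) : ℝ) : ℂ) * a⁻¹) • E)
    (1 + ((-t⁻¹ : ℝ) : ℂ) • G.adjMatrix ℂ) hZ
  · intro i
    rw [Matrix.add_apply, Matrix.smul_apply, hAdiag]; simp
  · intro i j hij h
    rw [Matrix.add_apply, Matrix.smul_apply, hAnadj i j h]; simp [hij]
  · intro i j
    rw [Matrix.add_apply, Matrix.smul_apply, smul_eq_mul]
    apply add_nonneg
    · rw [Matrix.one_apply]; split_ifs <;> simp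
    · apply mul_nonneg hsC
      by_cases h : G.Adj i j
      · rw [hAadj i j h]; simp
      · rw [hAnadj i j h]
  · rw [hZJ, Matrix.trace_smul, hJt, smul_eq_mul, mul_comm]
  · exact deflate hn _ hZ _ hJZ hZJ
  · exact (J_psd n).add (hEp.smul hc)
  · intro i
    rw [Matrix.add_apply, Matrix.smul_apply, ha, smul_eq_mul, Matrix.of_apply]
    push_cast
    field_simp
    ring
  · intro i j h
    rw [Matrix.add_apply, Matrix.smul_apply, hb i j h, smul_eq_mul, Matrix.of_apply]
    have : b = t * a / d := by rw [← hab]; field_simp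
    rw [this]
    push_cast
    field_simp
    ring
  · rw [Matrix.mul_add, Matrix.mul_smul, hJE, smul_zero, add_zero, J_mul_J, Matrix.trace_smul,
      hJt, smul_eq_mul]
  · rw [add_sub_cancel_left]
    exact hEp.smul hc
end
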